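/- (Theorem 3.1, unbiasedness in the limit) Let (S_α)_{α ∈ ℕ^d} be integrable real random variables on a probability space (Ω, F, P), let S be an integrable real random variable such that |E[S_α] − E[S]| → 0 as min_{1 ≤ i ≤ d} α_i → ∞, and let N be an ℕ^d-valued random variable independent of the family (S_α) with P(N ≥ α) > 0 for all α ∈ ℕ^d. Then the expectations of the partial estimators Z̄_n = Σ_{α ∈ I_0^n} ΔS_α · 1_{{N ≥ α}} / P(N ≥ α) converge: lim_{n→∞} E[Z̄_n] = E[S]. -/

import Mathlib

open MeasureTheory ProbabilityTheory Filter

/-- The `i`-th difference operator: `(Δ_i S)_α = S_α − S_{α−e_i}` if `α_i > 0`,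
and `(Δ_i S)_α = S_α` if `α_i = 0`. -/
def diffOp {d : ℕ} {V : Type*} [AddCommGroup V] [Module ℝ V]
    (i : Fin d) (S : (Fin d → ℕ) → V) : (Fin d → ℕ) → V :=
  fun α => if α i = 0 then S α else S α - S (Function.update α i (α i - 1))

/-- The mixed difference operator `Δ = Δ_1 ∘ ⋯ ∘ Δ_d`. -/
def mixedDiff {d : ℕ} {V : Type*} [AddCommGroup V] [Module ℝ V]
    (S : (Fin d → ℕ) → V) : (Fin d → ℕ) → V :=
  (List.finRange d).foldr (fun i T => diffOp i T) S

/-!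
The partial estimators are exactly unbiased for the truncation level: since `N` is independent of
the family, `1_{N ≥ α} / P(N ≥ α)` has mean one and is independent of `ΔS_α`, so
`E[Z̄_n] = ∑_{α ≤ n} E[ΔS_α] = ∑_{α ≤ n} Δ(E[S])_α`, and this sum telescopes, one coordinate at a
time, to `E[S_n]`. The limit is then the convergence assumed for `E[S_n]`.
-/

theorem sum_piFinset_update {ι : Type*} [Fintype ι] [DecidableEq ι] {κ : ι → Type*}
    {M : Type*} [AddCommMonoid M] (s : ∀ i, Finset (κ i)) (i : ι) (t : Finset (κ i)) (a : κ i)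
    (f : (∀ i, κ i) → M) :
    ∑ x ∈ Fintype.piFinset (Function.update s i t), f x =
      ∑ x ∈ Fintype.piFinset (Function.update s i {a}), ∑ b ∈ t, f (Function.update x i b) := by
  rw [← Finset.sum_product']
  refine Finset.sum_bij' (fun x _ => (Function.update x i a, x i))
    (fun p _ => Function.update p.1 i p.2) (fun x hx => ?_) (fun p hp => ?_) ?_ (fun p hp => ?_) ?_
  · rw [Fintype.mem_piFinset] at hx
    refine Finset.mem_product.2 ⟨Fintype.mem_piFinset.2 fun j => ?_, by simpa using hx i⟩
    by_cases hj : j = i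
    · subst hj; simp
    · simpa [hj] using hx j
  · obtain ⟨hp₁, hp₂⟩ := Finset.mem_product.1 hp
    refine Fintype.mem_piFinset.2 fun j => ?_
    by_cases hj : j = i
    · subst hj; simpa using hp₂
    · simpa [hj] using Fintype.mem_piFinset.1 hp₁ j
  · simp
  · have hpi : p.1 i = a := by
      simpa using Fintype.mem_piFinset.1 (Finset.mem_product.1 hp).1 i
    simp [← hpi]
  · simp

section Differences

variable {d : ℕ} {V : Type*} [AddCommGroup V] [Module ℝ V]

theorem sum_diffOp_update (S : (Fin d → ℕ) → V) (i : Fin d) (α : Fin d → ℕ) (m : ℕ) :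
    ∑ k ∈ Finset.Iic m, diffOp i S (Function.update α i k) = S (Function.update α i m) := by
  rw [← Nat.range_succ_eq_Iic]
  induction m with
  | zero => simp [diffOp]
  | succ m ih =>
    rw [Finset.sum_range_succ, ih]
    simp [diffOp]

/-- Keeping the coordinates outside `l` at their top value `n j` makes the statement inductive:
each new operator is outermost, so its coordinate telescopes before the others are summed. -/
theorem sum_piFinset_foldr_diffOp (S : (Fin d → ℕ) → V) (n : Fin d → ℕ) {l : List (Fin d)}
    (hl : l.Nodup) :
    ∑ α ∈ Fintype.piFinset (fun j => if j ∈ l then Finset.Iic (n j) else {n j}),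
      l.foldr diffOp S α = S n := by
  induction l with
  | nil => simp [Fintype.piFinset_singleton]
  | cons i l ih =>
    obtain ⟨hi, hl⟩ := List.nodup_cons.1 hl
    set box : Fin d → Finset ℕ := fun j => if j ∈ l then Finset.Iic (n j) else {n j} with hbox
    have box_cons : (fun j => if j ∈ i :: l then Finset.Iic (n j) else {n j}) =
        Function.update box i (Finset.Iic (n i)) := by
      ext1 j
      by_cases hj : j = i
      · subst hj; simp
      · simp [hbox, hj]
    have box_tail : Function.update box i {n i} = box := by
      simp [hbox, hi]
    rw [box_cons, sum_piFinset_update box i _ (n i), box_tail, ← ih hl]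
    refine Finset.sum_congr rfl fun α hα => ?_
    have hαi : α i = n i := by simpa [hbox, hi] using Fintype.mem_piFinset.1 hα i
    rw [List.foldr_cons, sum_diffOp_update, ← hαi, Function.update_eq_self]

theorem sum_Iic_mixedDiff (S : (Fin d → ℕ) → V) (n : Fin d → ℕ) :
    ∑ α ∈ Finset.Iic n, mixedDiff S α = S n := by
  have box_eq : Finset.Iic n =
      Fintype.piFinset fun j => if j ∈ List.finRange d then Finset.Iic (n j) else {n j} := by
    ext α
    simp [Pi.le_def]
  rw [box_eq]
  exact sum_piFinset_foldr_diffOp S n (List.nodup_finRange d)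

theorem measurable_foldr_diffOp [MeasurableSpace V] [MeasurableSub₂ V] (l : List (Fin d))
    (α : Fin d → ℕ) : Measurable fun S : (Fin d → ℕ) → V => l.foldr diffOp S α := by
  induction l generalizing α with
  | nil => exact measurable_pi_apply α
  | cons i l ih =>
    simp only [List.foldr_cons, diffOp]
    split_ifs
    · exact ih α
    · exact (ih α).sub (ih _)

theorem measurable_mixedDiff [MeasurableSpace V] [MeasurableSub₂ V] (α : Fin d → ℕ) :
    Measurable fun S : (Fin d → ℕ) → V => mixedDiff S α :=
  measurable_foldr_diffOp (List.finRange d) α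

end Differences

section IndicatorWeights

variable {Ω E : Type*} [MeasurableSpace Ω] {μ : Measure Ω} [NormedAddCommGroup E]
  [NormedSpace ℝ E] {A : Set Ω} {X : Ω → E}

theorem integrable_indicator_one_div_smul (hA : NullMeasurableSet A μ) (hX : Integrable X μ)
    (c : ℝ) :
    Integrable (fun ω => (A.indicator 1 ω / c) • X ω) μ := by
  have : (fun ω => (A.indicator (1 : Ω → ℝ) ω / c) • X ω) = A.indicator (c⁻¹ • X) := by
    ext ω
    by_cases hω : ω ∈ A <;> simp [hω]
  rw [this]
  exact (hX.smul c⁻¹).indicator₀ hA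

theorem integral_indicator_one_div_measureReal_smul [MeasurableSpace E] [BorelSpace E]
    (hA : NullMeasurableSet A μ) (hμA : μ.real A ≠ 0) (hX : AEStronglyMeasurable X μ)
    (hAX : IndepFun (A.indicator (1 : Ω → ℝ)) X μ) :
    ∫ ω, (A.indicator 1 ω / μ.real A) • X ω ∂μ = ∫ ω, X ω ∂μ := by
  have hint : ∫ ω, A.indicator (1 : Ω → ℝ) ω ∂μ = μ.real A := by
    rw [integral_indicator₀ hA]
    simp
  have hmeas : AEStronglyMeasurable (A.indicator (1 : Ω → ℝ)) μ :=
    aestronglyMeasurable_one.indicator₀ hA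
  calc ∫ ω, (A.indicator 1 ω / μ.real A) • X ω ∂μ
      = (μ.real A)⁻¹ • ∫ ω, A.indicator (1 : Ω → ℝ) ω • X ω ∂μ := by
        simp only [div_eq_inv_mul, mul_smul, integral_smul]
    _ = (μ.real A)⁻¹ • μ.real A • ∫ ω, X ω ∂μ := by
        rw [hAX.integral_fun_smul_eq_smul_integral hmeas hX, hint]
    _ = ∫ ω, X ω ∂μ := inv_smul_smul₀ hμA _

end IndicatorWeights

section Expectations

variable {d : ℕ} {Ω E : Type*} [MeasurableSpace Ω] {μ : Measure Ω} [NormedAddCommGroup E]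
  [NormedSpace ℝ E] {S : (Fin d → ℕ) → Ω → E} {N : Ω → Fin d → ℕ}

theorem integrable_diffOp (hS : ∀ α, Integrable (S α) μ) (i : Fin d) (α : Fin d → ℕ) :
    Integrable (fun ω => diffOp i (fun β => S β ω) α) μ := by
  unfold diffOp
  split_ifs
  · exact hS α
  · exact (hS α).sub (hS _)

theorem integral_diffOp (hS : ∀ α, Integrable (S α) μ) (i : Fin d) (α : Fin d → ℕ) :
    ∫ ω, diffOp i (fun β => S β ω) α ∂μ = diffOp i (fun β => ∫ ω, S β ω ∂μ) α := by
  unfold diffOp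
  split_ifs
  · rfl
  · exact integral_sub (hS α) (hS _)

theorem integrable_foldr_diffOp (hS : ∀ α, Integrable (S α) μ) (l : List (Fin d))
    (α : Fin d → ℕ) : Integrable (fun ω => l.foldr diffOp (fun β => S β ω) α) μ := by
  induction l generalizing α with
  | nil => exact hS α
  | cons i l ih => exact integrable_diffOp ih i α

theorem integral_foldr_diffOp (hS : ∀ α, Integrable (S α) μ) (l : List (Fin d))
    (α : Fin d → ℕ) :
    ∫ ω, l.foldr diffOp (fun β => S β ω) α ∂μ =
      l.foldr diffOp (fun β => ∫ ω, S β ω ∂μ) α := by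
  induction l generalizing α with
  | nil => rfl
  | cons i l ih =>
    simp only [List.foldr_cons, ← funext ih]
    exact integral_diffOp (integrable_foldr_diffOp hS l) i α

theorem integrable_mixedDiff (hS : ∀ α, Integrable (S α) μ) (α : Fin d → ℕ) :
    Integrable (fun ω => mixedDiff (fun β => S β ω) α) μ :=
  integrable_foldr_diffOp hS (List.finRange d) α

theorem integral_mixedDiff (hS : ∀ α, Integrable (S α) μ) (α : Fin d → ℕ) :
    ∫ ω, mixedDiff (fun β => S β ω) α ∂μ = mixedDiff (fun β => ∫ ω, S β ω ∂μ) α :=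
  integral_foldr_diffOp hS (List.finRange d) α

/-- The partial estimator `Z̄_n` of the paper, for a family of random vectors and summed over a
rectangular box with arbitrary upper corner `n`; the weight `1_{N ≥ α} / P(N ≥ α)` acts as a
scalar. -/
noncomputable def partialEstimator (μ : Measure Ω) (S : (Fin d → ℕ) → Ω → E)
    (N : Ω → Fin d → ℕ) (n : Fin d → ℕ) (ω : Ω) : E :=
  ∑ α ∈ Finset.Iic n, ({ω' | α ≤ N ω'}.indicator 1 ω / μ.real {ω' | α ≤ N ω'}) •
    mixedDiff (fun β => S β ω) α

theorem indepFun_indicator_mixedDiff [MeasurableSpace E] [MeasurableSub₂ E]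
    (hind : IndepFun N (fun ω α => S α ω) μ) (α : Fin d → ℕ) :
    IndepFun ({ω | α ≤ N ω}.indicator (1 : Ω → ℝ)) (fun ω => mixedDiff (fun β => S β ω) α) μ :=
  hind.comp (φ := (Set.Ici α).indicator (1 : (Fin d → ℕ) → ℝ)) .of_discrete
    (measurable_mixedDiff α)

theorem integral_partialEstimator [MeasurableSpace E] [BorelSpace E] [MeasurableSub₂ E]
    (hS : ∀ α, Integrable (S α) μ) (hN : AEMeasurable N μ)
    (hind : IndepFun N (fun ω α => S α ω) μ) {n : Fin d → ℕ}
    (hpos : ∀ α ≤ n, μ.real {ω | α ≤ N ω} ≠ 0) :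
    ∫ ω, partialEstimator μ S N n ω ∂μ = ∫ ω, S n ω ∂μ := by
  have hA (α : Fin d → ℕ) : NullMeasurableSet {ω | α ≤ N ω} μ :=
    hN.nullMeasurableSet_preimage (s := Set.Ici α) .of_discrete
  have hΔ := integrable_mixedDiff hS
  calc ∫ ω, partialEstimator μ S N n ω ∂μ
      = ∑ α ∈ Finset.Iic n, ∫ ω, mixedDiff (fun β => S β ω) α ∂μ := by
        unfold partialEstimator
        rw [integral_finsetSum _ fun α _ => integrable_indicator_one_div_smul (hA α) (hΔ α) _]
        exact Finset.sum_congr rfl fun α hα =>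
          integral_indicator_one_div_measureReal_smul (hA α) (hpos α (Finset.mem_Iic.1 hα))
            (hΔ α).aestronglyMeasurable (indepFun_indicator_mixedDiff hind α)
    _ = ∑ α ∈ Finset.Iic n, mixedDiff (fun β => ∫ ω, S β ω ∂μ) α :=
        Finset.sum_congr rfl fun α _ => integral_mixedDiff hS α
    _ = ∫ ω, S n ω ∂μ := sum_Iic_mixedDiff _ n

theorem estimator_unbiased_limit_general [CompleteSpace E] [MeasurableSpace E] [BorelSpace E]
    [MeasurableSub₂ E] (hS : ∀ α, Integrable (S α) μ) (hN : AEMeasurable N μ)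
    (hind : IndepFun N (fun ω α => S α ω) μ) (hpos : ∀ α, μ.real {ω | α ≤ N ω} ≠ 0)
    {l : Filter (Fin d → ℕ)} {L : E} (hconv : Tendsto (fun n => ∫ ω, S n ω ∂μ) l (nhds L)) :
    Tendsto (fun n => ∫ ω, partialEstimator μ S N n ω ∂μ) l (nhds L) := by
  simpa only [integral_partialEstimator hS hN hind fun α _ => hpos α] using hconv

end Expectations

theorem partialEstimator_eq_sum_mul_div {d : ℕ} {Ω : Type*} [MeasurableSpace Ω] (μ : Measure Ω)
    (S : (Fin d → ℕ) → Ω → ℝ) (N : Ω → Fin d → ℕ) (n : Fin d → ℕ) (ω : Ω) :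
    partialEstimator μ S N n ω = ∑ α ∈ Finset.Iic n,
      mixedDiff (fun β => S β ω) α * {ω' | α ≤ N ω'}.indicator 1 ω / μ.real {ω' | α ≤ N ω'} :=
  Finset.sum_congr rfl fun α _ => by rw [smul_eq_mul, mul_comm, mul_div_assoc]

theorem tendsto_diagonal_of_forall_abs_sub_le {ι : Type*} {a : (ι → ℕ) → ℝ} {L : ℝ}
    (h : ∀ ε > (0 : ℝ), ∃ M : ℕ, ∀ α : ι → ℕ, (∀ i, M ≤ α i) → |a α - L| ≤ ε) :
    Tendsto a (map (Function.const ι) atTop) (nhds L) := by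
  refine Metric.nhds_basis_closedBall.tendsto_right_iff.2 fun ε hε => ?_
  obtain ⟨M, hM⟩ := h ε hε
  exact eventually_map.2 <| (eventually_ge_atTop M).mono fun n hn => hM _ fun _ => hn

/-- Theorem 3.1, unbiasedness in the limit: if `|E[S_α] − E[S]| → 0`
as `min_i α_i → ∞` and `N` is independent of the family `(S_α)` with `P(N ≥ α) > 0`
for all `α`, then `E[Z̄_n] → E[S]` as `n → ∞`, where
`Z̄_n = Σ_{α ∈ I_0^n} ΔS_α · 1_{N ≥ α} / P(N ≥ α)`. -/
theorem estimator_unbiased_limit {d : ℕ} (hd : 1 ≤ d)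
    {Ω : Type*} [MeasureSpace Ω] [IsProbabilityMeasure (ℙ : Measure Ω)]
    (S : (Fin d → ℕ) → Ω → ℝ) (hS : ∀ α, Integrable (S α) ℙ)
    (Slim : Ω → ℝ) (hSlim : Integrable Slim ℙ)
    (hconv : ∀ ε > (0 : ℝ), ∃ M : ℕ, ∀ α : Fin d → ℕ, (∀ i, M ≤ α i) →
      |(∫ ω, S α ω ∂ℙ) - ∫ ω, Slim ω ∂ℙ| ≤ ε)
    (N : Ω → (Fin d → ℕ)) (hN : Measurable N)
    (hind : IndepFun N (fun ω => fun α => S α ω) ℙ)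
    (hpos : ∀ α : Fin d → ℕ, 0 < ℙ {ω | α ≤ N ω}) :
    Tendsto (fun n : ℕ =>
        ∫ ω, (∑ α ∈ Finset.Iic ((fun _ => n) : Fin d → ℕ),
          mixedDiff (fun β => S β ω) α * Set.indicator {ω' | α ≤ N ω'} 1 ω
            / (ℙ {ω' | α ≤ N ω'}).toReal) ∂ℙ)
      atTop (nhds (∫ ω, Slim ω ∂ℙ)) := by
  simpa only [partialEstimator_eq_sum_mul_div] using! tendsto_map'_iff.1 <|
    estimator_unbiased_limit_general hS hN.aemeasurable hind
      (fun α => (measureReal_ne_zero_iff).2 (hpos α).ne')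
      (tendsto_diagonal_of_forall_abs_sub_le hconv)
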